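/- The operator F is monotonic: for all probability measures μ, ν on Ω = ℤ → Bool, if μ ≼ ν in the stochastic order, then F μ ≼ F ν. Here μ ≼ ν means μ(S) ≤ ν(S) for every measurable upper set S ⊆ Ω, where S is upper if whenever x ∈ S and x ≤ y pointwise (with the order false < true on Bool), then y ∈ S. -/

import Mathlib

/-!
Monotonicity comes from a coupling of all the update kernels. Drive each site `i` by its own
uniform variable `u i ∈ [0, 1]`, and let it become plus exactly when `u i ≤ θ (x i) (x (i + 1))`.
The resulting map `PCA.update α β x u` has law `K x` when `u` is an i.i.d. uniform family
(`PCA.kernel_eq_map`: both laws agree on thin cylinders, which form a generating π-system), and it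
is increasing in `x` for fixed `u`, because `θ` is increasing in both arguments.

For a measurable upper set `A`, Tonelli then gives `F μ A = ∫ μ {x | update x u ∈ A} dP(u)`
(`PCA.lintegral_kernel_eq`). For each `u` the set `{x | update x u ∈ A}` is again a measurable upper
set, so the integrand grows when `μ` is replaced by a stochastically larger `ν`.
-/

open MeasureTheory Filter

namespace PCA

/-- Configuration space: `true` is ⊕ (plus), `false` is ⊖ (minus). -/
abbrev Config : Type := ℤ → Bool

/-- Transition probabilities of the PCA. -/
def theta (α β : ℝ) : Bool → Bool → ℝ
  | false, false => 0
  | true,  false => β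
  | false, true  => α
  | true,  true  => 1

/-- Thin cylinder determined by a finite set of coordinates and prescribed values. -/
def cyl (S : Finset ℤ) (a : ℤ → Bool) : Set Config := {y | ∀ i ∈ S, y i = a i}

/-- `K` is the update kernel of the PCA: from configuration `x`, all sites update
independently, site `i` becoming plus with probability `theta α β (x i) (x (i+1))`.
This pins down `K x` as the corresponding product of Bernoulli measures, via its
values on thin cylinders. -/
def IsPCAKernel (α β : ℝ) (K : Config → Measure Config) : Prop :=
  (∀ x, IsProbabilityMeasure (K x)) ∧
  ∀ (x : Config) (S : Finset ℤ) (a : ℤ → Bool),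
    K x (cyl S a) =
      ∏ i ∈ S, ENNReal.ofReal
        (if a i then theta α β (x i) (x (i + 1)) else 1 - theta α β (x i) (x (i + 1)))

/-- `F` is the PCA operator with parameters `α, β`: `F μ` is `μ` bound with the
product-Bernoulli update kernel. -/
def IsPCA (α β : ℝ) (F : Measure Config → Measure Config) : Prop :=
  ∃ K : Config → Measure Config, IsPCAKernel α β K ∧
    ∀ (μ : Measure Config) (A : Set Config), MeasurableSet A →
      F μ A = ∫⁻ x, K x A ∂μ

/-- The configuration "all minuses". -/
def allMinus : Config := fun _ => false

/-- The configuration "all pluses". -/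
def allPlus : Config := fun _ => true

/-- Convergence of a sequence of measures to `ν` on all thin cylinders. -/
def TendstoCyl (seq : ℕ → Measure Config) (ν : Measure Config) : Prop :=
  ∀ (S : Finset ℤ) (a : ℤ → Bool),
    Tendsto (fun t => seq t (cyl S a)) atTop (nhds (ν (cyl S a)))

end PCA

/-- Stochastic order on measures on the configuration space: `μ ≼ ν` iff
`μ S ≤ ν S` for every measurable upper set `S`. -/
def PCA.stochLE (μ ν : Measure PCA.Config) : Prop :=
  ∀ S : Set PCA.Config, MeasurableSet S → IsUpperSet S → μ S ≤ ν S

namespace PCA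

/-- The uniform distribution on `[0, 1]`, as a measure on `ℝ`. -/
noncomputable def unif : Measure ℝ := volume.restrict (Set.Icc 0 1)

instance : IsProbabilityMeasure unif := ⟨by simp [unif]⟩

/-- The law of an i.i.d. family of uniform variables on `[0, 1]` indexed by the sites. -/
noncomputable def noise : Measure (ℤ → ℝ) := Measure.infinitePi (fun _ : ℤ => unif)

instance : IsProbabilityMeasure noise := by unfold noise; infer_instance

/-- The deterministic update of the configuration `x` driven by the noise `u`: site `i` becomes
plus iff `u i ≤ θ (x i) (x (i + 1))`. -/
noncomputable def update (α β : ℝ) (x : Config) (u : ℤ → ℝ) : Config :=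
  fun i => decide (u i ≤ theta α β (x i) (x (i + 1)))

lemma theta_mem {α β : ℝ} (hα0 : 0 ≤ α) (hα1 : α ≤ 1) (hβ0 : 0 ≤ β) (hβ1 : β ≤ 1) (a b : Bool) :
    0 ≤ theta α β a b ∧ theta α β a b ≤ 1 := by
  cases a <;> cases b <;> simp [theta, *]

lemma theta_mono {α β : ℝ} (hα0 : 0 ≤ α) (hα1 : α ≤ 1) (hβ0 : 0 ≤ β) (hβ1 : β ≤ 1)
    {a b a' b' : Bool} (ha : a ≤ a') (hb : b ≤ b') : theta α β a b ≤ theta α β a' b' := by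
  revert ha hb
  cases a <;> cases b <;> cases a' <;> cases b' <;> simp [theta, Bool.le_iff_imp, *]

lemma update_mono {α β : ℝ} (hα0 : 0 ≤ α) (hα1 : α ≤ 1) (hβ0 : 0 ≤ β) (hβ1 : β ≤ 1)
    {x y : Config} (h : x ≤ y) (u : ℤ → ℝ) : update α β x u ≤ update α β y u := by
  intro i
  have h1 := theta_mono hα0 hα1 hβ0 hβ1 (h i) (h (i + 1))
  simp only [update]
  intro h2
  simp only [decide_eq_true_eq] at h2 ⊢
  exact h2.trans h1

lemma measurable_update (α β : ℝ) :
    Measurable (fun p : Config × (ℤ → ℝ) => update α β p.1 p.2) := by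
  refine measurable_pi_lambda _ fun i => measurable_to_bool ?_
  have hθ : Measurable (fun p : Config × (ℤ → ℝ) => theta α β (p.1 i) (p.1 (i + 1))) := by
    have h : Measurable (fun q : Bool × Bool => theta α β q.1 q.2) := measurable_of_countable _
    exact h.comp (f := fun p : Config × (ℤ → ℝ) => (p.1 i, p.1 (i + 1))) (by fun_prop)
  have hu : Measurable (fun p : Config × (ℤ → ℝ) => p.2 i) := by fun_prop
  convert measurableSet_le hu hθ using 1
  ext p
  simp [update]

lemma unif_threshold {c : ℝ} (h0 : 0 ≤ c) (h1 : c ≤ 1) (b : Bool) :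
    unif {t | decide (t ≤ c) = b} = ENNReal.ofReal (if b then c else 1 - c) := by
  cases b
  · have h : {t : ℝ | decide (t ≤ c) = false} = Set.Ioi c := by ext; simp
    have h' : Set.Ioi c ∩ Set.Icc 0 1 = Set.Ioc c 1 := by
      ext t
      simp only [Set.mem_inter_iff, Set.mem_Ioi, Set.mem_Icc, Set.mem_Ioc]
      exact ⟨fun h => ⟨h.1, h.2.2⟩, fun h => ⟨h.1, by linarith, h.2⟩⟩
    rw [h, unif, Measure.restrict_apply measurableSet_Ioi, h']
    simp
  · have h : {t : ℝ | decide (t ≤ c) = true} = Set.Iic c := by ext; simp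
    have h' : Set.Iic c ∩ Set.Icc 0 1 = Set.Icc 0 c := by
      ext t
      simp only [Set.mem_inter_iff, Set.mem_Iic, Set.mem_Icc]
      exact ⟨fun h => ⟨h.2.1, h.1⟩, fun h => ⟨h.2, h.1, by linarith⟩⟩
    rw [h, unif, Measure.restrict_apply measurableSet_Iic, h']
    simp

lemma measurableSet_cyl (S : Finset ℤ) (a : ℤ → Bool) : MeasurableSet (cyl S a) := by
  have : cyl S a = ⋂ i ∈ S, (fun y : Config => y i) ⁻¹' {a i} := by ext; simp [cyl]
  rw [this]
  exact Finset.measurableSet_biInter _ fun i _ =>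
    measurable_pi_apply i (MeasurableSet.singleton _)

lemma isPiSystem_cyl : IsPiSystem {A | ∃ S a, A = cyl S a} := by
  rintro _ ⟨S, a, rfl⟩ _ ⟨T, b, rfl⟩ ⟨c, hc, hc'⟩
  -- any common point prescribes the values on both coordinate sets
  refine ⟨S ∪ T, c, ?_⟩
  ext y
  simp only [cyl, Set.mem_inter_iff, Set.mem_ofPred_eq, Finset.mem_union] at *
  constructor
  · rintro ⟨h, h'⟩ i (hi | hi)
    · rw [h i hi, hc i hi]
    · rw [h' i hi, hc' i hi]
  · intro h
    exact ⟨fun i hi => by rw [h i (.inl hi), hc i hi], fun i hi => by rw [h i (.inr hi), hc' i hi]⟩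

lemma generateFrom_cyl :
    (inferInstance : MeasurableSpace Config) =
      MeasurableSpace.generateFrom {A | ∃ S a, A = cyl S a} := by
  apply le_antisymm
  · refine iSup_le fun i => ?_
    rw [← measurable_iff_comap_le]
    refine @measurable_to_bool _ (MeasurableSpace.generateFrom _) _ ?_
    refine MeasurableSpace.measurableSet_generateFrom ⟨{i}, fun _ => true, ?_⟩
    ext y
    simp [cyl]
  · refine MeasurableSpace.generateFrom_le ?_
    rintro _ ⟨S, a, rfl⟩
    exact measurableSet_cyl S a

/-- The coupling: every update kernel is the law of `update` under the common noise. -/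
lemma kernel_eq_map {α β : ℝ} (hα0 : 0 ≤ α) (hα1 : α ≤ 1) (hβ0 : 0 ≤ β) (hβ1 : β ≤ 1)
    {K : Config → Measure Config} (hK : IsPCAKernel α β K) (x : Config) :
    K x = noise.map (update α β x) := by
  have hm : Measurable (update α β x) := (measurable_update α β).comp measurable_prodMk_left
  have := hK.1 x
  have : IsProbabilityMeasure (noise.map (update α β x)) :=
    Measure.isProbabilityMeasure_map hm.aemeasurable
  refine ext_of_generate_finite _ generateFrom_cyl isPiSystem_cyl ?_ (by simp)
  rintro _ ⟨S, a, rfl⟩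
  have hpre : update α β x ⁻¹' cyl S a =
      Set.pi S fun i => {t | decide (t ≤ theta α β (x i) (x (i + 1))) = a i} := by
    ext u
    simp [cyl, update, Set.mem_pi]
  rw [hK.2, Measure.map_apply hm (measurableSet_cyl S a), hpre, noise, Measure.infinitePi_pi]
  · refine Finset.prod_congr rfl fun i _ => ?_
    obtain ⟨h0, h1⟩ := theta_mem hα0 hα1 hβ0 hβ1 (x i) (x (i + 1))
    rw [unif_threshold h0 h1]
  · intro i _
    have h : Measurable fun t : ℝ => decide (t ≤ theta α β (x i) (x (i + 1))) := by
      refine measurable_to_bool ?_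
      convert (measurableSet_Iic : MeasurableSet (Set.Iic (theta α β (x i) (x (i + 1))))) using 1
      ext
      simp
    exact h (MeasurableSet.singleton (a i))

/-- Tonelli for the coupling: first average over the initial configuration, then over the noise. -/
lemma lintegral_kernel_eq {α β : ℝ} (hα0 : 0 ≤ α) (hα1 : α ≤ 1) (hβ0 : 0 ≤ β) (hβ1 : β ≤ 1)
    {K : Config → Measure Config} (hK : IsPCAKernel α β K) (μ : Measure Config)
    [IsProbabilityMeasure μ] {A : Set Config} (hA : MeasurableSet A) :
    ∫⁻ x, K x A ∂μ = ∫⁻ u, μ {x | update α β x u ∈ A} ∂noise := by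
  have hE := measurable_update α β hA
  have h : ∀ x, K x A = noise (Prod.mk x ⁻¹' ((fun p => update α β p.1 p.2) ⁻¹' A)) := by
    intro x
    have hm : Measurable (update α β x) := (measurable_update α β).comp measurable_prodMk_left
    rw [kernel_eq_map hα0 hα1 hβ0 hβ1 hK, Measure.map_apply hm hA]
    rfl
  simp_rw [h]
  rw [← Measure.prod_apply hE, Measure.prod_apply_symm hE]
  rfl

end PCA

/-- the PCA operator `F` is monotonic for the stochastic order. -/
theorem pca_monotonic (α β : ℝ)
    (hα0 : 0 ≤ α) (hα1 : α ≤ 1) (hβ0 : 0 ≤ β) (hβ1 : β ≤ 1)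
    (F : Measure PCA.Config → Measure PCA.Config) (hF : PCA.IsPCA α β F)
    (μ ν : Measure PCA.Config) [IsProbabilityMeasure μ] [IsProbabilityMeasure ν]
    (hμν : PCA.stochLE μ ν) :
    PCA.stochLE (F μ) (F ν) := by
  obtain ⟨K, hK, hF⟩ := hF
  intro A hA hup
  rw [hF μ A hA, hF ν A hA, PCA.lintegral_kernel_eq hα0 hα1 hβ0 hβ1 hK μ hA,
    PCA.lintegral_kernel_eq hα0 hα1 hβ0 hβ1 hK ν hA]
  refine lintegral_mono fun u => hμν _ ?_ ?_
  · exact (PCA.measurable_update α β).comp measurable_prodMk_right hA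
  · exact fun x y hxy hx => hup (PCA.update_mono hα0 hα1 hβ0 hβ1 hxy u) hx
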